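/- Sufficient decrease of the alternating minimization iterates: if (U^{(k)})_{k≥0} and (V^{(k)})_{k≥0} are alternating-minimization iterates for f, then for every k ≥ 0, f(U^{(k+1)}, V^{(k+1)}) + (1/2)·(‖U^{(k+1)} − U^{(k)}‖_F² + ‖V^{(k+1)} − V^{(k)}‖_F²) ≤ f(U^{(k)}, V^{(k)}); in particular the sequence k ↦ f(U^{(k)}, V^{(k)}) is nonincreasing. -/

import Mathlib

open Finset Matrix

/-- Squared Frobenius norm: `frobSq X = ‖X‖_F²`. -/
noncomputable def frobSq {a b : ℕ} (X : Matrix (Fin a) (Fin b) ℝ) : ℝ :=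
  ∑ i, ∑ j, (X i j) ^ 2

/-- The matrix-completion objective
`f(U,V) = (1/2)(‖U‖_F² + ‖V‖_F²) + (μ/2) ∑_{(i,j)∈Ω} ((UV − M)_{ij})² + (ν/2) ‖L(UV) − b‖²`. -/
noncomputable def objF {m n r p : ℕ} (Ω : Finset (Fin m × Fin n)) (M : Matrix (Fin m) (Fin n) ℝ)
    (L : Matrix (Fin m) (Fin n) ℝ →ₗ[ℝ] EuclideanSpace ℝ (Fin p))
    (b : EuclideanSpace ℝ (Fin p)) (μ ν : ℝ)
    (U : Matrix (Fin m) (Fin r) ℝ) (V : Matrix (Fin r) (Fin n) ℝ) : ℝ :=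
  (1 / 2) * (frobSq U + frobSq V)
    + (μ / 2) * ∑ ij ∈ Ω, ((U * V - M) ij.1 ij.2) ^ 2
    + (ν / 2) * ‖L (U * V) - b‖ ^ 2

/-- Data-fitting part of the objective, as a function of the product `X = UV`. -/
noncomputable def fitF {m n p : ℕ} (Ω : Finset (Fin m × Fin n)) (M : Matrix (Fin m) (Fin n) ℝ)
    (L : Matrix (Fin m) (Fin n) ℝ →ₗ[ℝ] EuclideanSpace ℝ (Fin p))
    (b : EuclideanSpace ℝ (Fin p)) (μ ν : ℝ) (X : Matrix (Fin m) (Fin n) ℝ) : ℝ :=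
  (μ / 2) * ∑ ij ∈ Ω, ((X - M) ij.1 ij.2) ^ 2 + (ν / 2) * ‖L X - b‖ ^ 2

lemma frobSq_nonneg {a b : ℕ} (X : Matrix (Fin a) (Fin b) ℝ) : 0 ≤ frobSq X := by
  unfold frobSq; positivity

lemma frobSq_segment {a b : ℕ} (A B : Matrix (Fin a) (Fin b) ℝ) (t : ℝ) :
    frobSq ((1 - t) • A + t • B)
      = (1 - t) * frobSq A + t * frobSq B - t * (1 - t) * frobSq (A - B) := by
  unfold frobSq
  simp only [Finset.mul_sum, ← Finset.sum_add_distrib, ← Finset.sum_sub_distrib]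
  refine Finset.sum_congr rfl fun i _ => Finset.sum_congr rfl fun j _ => ?_
  simp only [Matrix.add_apply, Matrix.smul_apply, Matrix.sub_apply, smul_eq_mul]
  ring

lemma fitF_segment {m n p : ℕ} (Ω : Finset (Fin m × Fin n)) (M : Matrix (Fin m) (Fin n) ℝ)
    (L : Matrix (Fin m) (Fin n) ℝ →ₗ[ℝ] EuclideanSpace ℝ (Fin p))
    (b : EuclideanSpace ℝ (Fin p)) (μ ν : ℝ) (hμ : 0 < μ) (hν : 0 < ν)
    (X Y : Matrix (Fin m) (Fin n) ℝ) (t : ℝ) (h0 : 0 < t) (h1 : t < 1) :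
    fitF Ω M L b μ ν ((1 - t) • X + t • Y)
      ≤ (1 - t) * fitF Ω M L b μ ν X + t * fitF Ω M L b μ ν Y := by
  have ht : 0 < t * (1 - t) := mul_pos h0 (by linarith)
  have hS : ∑ ij ∈ Ω, (((1 - t) • X + t • Y - M) ij.1 ij.2) ^ 2
      ≤ (1 - t) * ∑ ij ∈ Ω, ((X - M) ij.1 ij.2) ^ 2
        + t * ∑ ij ∈ Ω, ((Y - M) ij.1 ij.2) ^ 2 := by
    simp only [Finset.mul_sum, ← Finset.sum_add_distrib]
    refine Finset.sum_le_sum fun ij _ => ?_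
    simp only [Matrix.add_apply, Matrix.smul_apply, Matrix.sub_apply, smul_eq_mul]
    have := mul_nonneg ht.le (sq_nonneg (X ij.1 ij.2 - Y ij.1 ij.2))
    linarith
  have hN : ‖L ((1 - t) • X + t • Y) - b‖ ^ 2
      ≤ (1 - t) * ‖L X - b‖ ^ 2 + t * ‖L Y - b‖ ^ 2 := by
    have e : L ((1 - t) • X + t • Y) - b = (1 - t) • (L X - b) + t • (L Y - b) := by
      rw [map_add, map_smul, map_smul]; module
    have h : ‖L ((1 - t) • X + t • Y) - b‖ ≤ (1 - t) * ‖L X - b‖ + t * ‖L Y - b‖ := by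
      rw [e]
      refine (norm_add_le _ _).trans_eq ?_
      rw [norm_smul, norm_smul, Real.norm_of_nonneg h0.le,
        Real.norm_of_nonneg (by linarith : (0:ℝ) ≤ 1 - t)]
    have h2 := pow_le_pow_left₀ (norm_nonneg _) h 2
    have := mul_nonneg ht.le (sq_nonneg (‖L X - b‖ - ‖L Y - b‖))
    linarith
  unfold fitF
  have a1 := mul_le_mul_of_nonneg_left hS (by positivity : 0 ≤ μ / 2)
  have a2 := mul_le_mul_of_nonneg_left hN (by positivity : 0 ≤ ν / 2)
  linarith

lemma add_le_of_forall_segment (a b c : ℝ) (hc : 0 ≤ c)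
    (h : ∀ t : ℝ, 0 < t → t < 1 → t * (a + (1 - t) * c) ≤ t * b) : a + c ≤ b := by
  by_contra hh
  have hd : 0 < a + c - b := by linarith
  set d := a + c - b with hdd
  have hp : 0 < 2 * (c + d) := by linarith
  have t0 : 0 < d / (2 * (c + d)) := by positivity
  have t1 : d / (2 * (c + d)) < 1 := by rw [div_lt_one hp]; linarith
  have h1 := le_of_mul_le_mul_left (h _ t0 t1) t0
  have h2 : d / (2 * (c + d)) * (2 * (c + d)) = d := div_mul_cancel₀ _ hp.ne'
  have h3 := mul_pos t0 hd
  nlinarith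

lemma objF_eq {m n r p : ℕ} (Ω : Finset (Fin m × Fin n)) (M : Matrix (Fin m) (Fin n) ℝ)
    (L : Matrix (Fin m) (Fin n) ℝ →ₗ[ℝ] EuclideanSpace ℝ (Fin p))
    (b : EuclideanSpace ℝ (Fin p)) (μ ν : ℝ)
    (U : Matrix (Fin m) (Fin r) ℝ) (V : Matrix (Fin r) (Fin n) ℝ) :
    objF Ω M L b μ ν U V = (1 / 2) * (frobSq U + frobSq V) + fitF Ω M L b μ ν (U * V) := by
  unfold objF fitF; ring

/-- Sufficient decrease of the alternating-minimization iterates; in particular the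
objective values are nonincreasing. -/
theorem objF_sufficient_decrease {m n r p : ℕ} (Ω : Finset (Fin m × Fin n)) (M : Matrix (Fin m) (Fin n) ℝ)
    (L : Matrix (Fin m) (Fin n) ℝ →ₗ[ℝ] EuclideanSpace ℝ (Fin p))
    (b : EuclideanSpace ℝ (Fin p)) (μ ν : ℝ) (hμ : 0 < μ) (hν : 0 < ν)
    (U : ℕ → Matrix (Fin m) (Fin r) ℝ) (V : ℕ → Matrix (Fin r) (Fin n) ℝ)
    (hUstep : ∀ (k : ℕ) (U' : Matrix (Fin m) (Fin r) ℝ),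
      objF Ω M L b μ ν (U (k + 1)) (V k) ≤ objF Ω M L b μ ν U' (V k))
    (hVstep : ∀ (k : ℕ) (V' : Matrix (Fin r) (Fin n) ℝ),
      objF Ω M L b μ ν (U (k + 1)) (V (k + 1)) ≤ objF Ω M L b μ ν (U (k + 1)) V') :
    (∀ k : ℕ,
        objF Ω M L b μ ν (U (k + 1)) (V (k + 1))
          + (1 / 2) * (frobSq (U (k + 1) - U k) + frobSq (V (k + 1) - V k))
          ≤ objF Ω M L b μ ν (U k) (V k)) ∧
      Antitone (fun k : ℕ => objF Ω M L b μ ν (U k) (V k)) := by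
  have hU : ∀ k, objF Ω M L b μ ν (U (k + 1)) (V k) + (1 / 2) * frobSq (U (k + 1) - U k)
      ≤ objF Ω M L b μ ν (U k) (V k) := by
    intro k
    refine add_le_of_forall_segment _ _ _
      (mul_nonneg (by norm_num) (frobSq_nonneg _)) fun t h0 h1 => ?_
    have h := hUstep k ((1 - t) • U (k + 1) + t • U k)
    have hs := fitF_segment Ω M L b μ ν hμ hν (U (k + 1) * V k) (U k * V k) t h0 h1
    simp only [objF_eq, frobSq_segment, Matrix.add_mul, Matrix.smul_mul] at h ⊢
    linarith
  have hV : ∀ k, objF Ω M L b μ ν (U (k + 1)) (V (k + 1))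
        + (1 / 2) * frobSq (V (k + 1) - V k)
      ≤ objF Ω M L b μ ν (U (k + 1)) (V k) := by
    intro k
    refine add_le_of_forall_segment _ _ _
      (mul_nonneg (by norm_num) (frobSq_nonneg _)) fun t h0 h1 => ?_
    have h := hVstep k ((1 - t) • V (k + 1) + t • V k)
    have hs := fitF_segment Ω M L b μ ν hμ hν (U (k + 1) * V (k + 1)) (U (k + 1) * V k) t h0 h1
    simp only [objF_eq, frobSq_segment, Matrix.mul_add, Matrix.mul_smul] at h ⊢
    linarith
  refine ⟨fun k => by linarith [hU k, hV k], antitone_nat_of_succ_le fun k => ?_⟩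
  linarith [hU k, hV k, frobSq_nonneg (U (k + 1) - U k), frobSq_nonneg (V (k + 1) - V k)]
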